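/- arXiv:1108.4195 — 4 statements merged into one kernel-verified Lean document; each statement's English description precedes it below -/
import Mathlib

section
/- Let 𝒟 be a skeletal commutative square of continuous maps f̃ : X̃ → Ỹ, f : X → Y, p_X : X̃ → X, p_Y : Ỹ → Y with p_Y ∘ f̃ = f ∘ p_X, such that f̃ is a closed map, p_Y is surjective, and X is a regular topological space. Then each non-empty open set U ⊆ X contains a non-empty open set W ⊆ U such that f(W) is open in Y and f̃(p_X⁻¹(W)) = p_Y⁻¹(f(W)). -/
open Set Topology

/-- A commutative square (with top map `g' : X' → Y'`, bottom map `g : X → Y` and vertical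
maps `qX : X' → X`, `qY : Y' → Y`) is *skeletal at a point* `x ∈ X` if for each neighborhood
`U` of `x` there is a non-empty open `V ⊆ Y` with `V ⊆ cl (g '' U)` and
`qY ⁻¹' V ⊆ cl (g' '' (qX ⁻¹' U))`. -/
def SquareSkeletalAt {X Y X' Y' : Type*} [TopologicalSpace X] [TopologicalSpace Y]
    [TopologicalSpace X'] [TopologicalSpace Y']
    (g' : X' → Y') (g : X → Y) (qX : X' → X) (qY : Y' → Y) (x : X) : Prop :=
  ∀ U ∈ 𝓝 x, ∃ V : Set Y, IsOpen V ∧ V.Nonempty ∧ V ⊆ closure (g '' U) ∧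
    qY ⁻¹' V ⊆ closure (g' '' (qX ⁻¹' U))

/-- A commutative square is *open at a point* `x ∈ X` if for each neighborhood `U` of `x`
the point `g x` has a neighborhood `V ⊆ Y` with `V ⊆ g '' U` and
`qY ⁻¹' V ⊆ g' '' (qX ⁻¹' U)`. -/
def SquareOpenAt {X Y X' Y' : Type*} [TopologicalSpace X] [TopologicalSpace Y]
    [TopologicalSpace X'] [TopologicalSpace Y']
    (g' : X' → Y') (g : X → Y) (qX : X' → X) (qY : Y' → Y) (x : X) : Prop :=
  ∀ U ∈ 𝓝 x, ∃ V : Set Y, V ∈ 𝓝 (g x) ∧ V ⊆ g '' U ∧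
    qY ⁻¹' V ⊆ g' '' (qX ⁻¹' U)

/-- `f` is *skeletal at a point* `x` if for each neighborhood `U` of `x` the closure of
`f(U)` has non-empty interior. -/
def SkeletalAtPoint {X Y : Type*} [TopologicalSpace X] [TopologicalSpace Y]
    (f : X → Y) (x : X) : Prop :=
  ∀ U ∈ 𝓝 x, (interior (closure (f '' U))).Nonempty

/-!
Inside `U` choose a closed neighborhood `C` of a point of `U`. Since `f̃` is closed, `f̃ (pX⁻¹ C)`
is closed, so skeletality gives a non-empty open `V` with `pY⁻¹ V ⊆ f̃ (pX⁻¹ C) ⊆ f̃ (pX⁻¹ U)`,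
without any closure on the right. Surjectivity of `pY` pushes this down to `V ⊆ f U`, and then
`W = U ∩ f⁻¹ V` satisfies `f W = V` and `f̃ (pX⁻¹ W) = pY⁻¹ V`.
-/

section CommutativeSquare

variable {X Y Xt Yt : Type*} {ft : Xt → Yt} {f : X → Y} {pX : Xt → X} {pY : Yt → Y}

theorem image_preimage_inter_preimage_of_comm (hcomm : ∀ z, pY (ft z) = f (pX z))
    (U : Set X) (V : Set Y) :
    ft '' (pX ⁻¹' (U ∩ f ⁻¹' V)) = ft '' (pX ⁻¹' U) ∩ pY ⁻¹' V := by
  have hpreimage : pX ⁻¹' (f ⁻¹' V) = ft ⁻¹' (pY ⁻¹' V) := by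
    ext z
    simp only [mem_preimage, hcomm]
  rw [preimage_inter, hpreimage, image_inter_preimage]

theorem subset_image_of_preimage_subset_image_preimage (hcomm : ∀ z, pY (ft z) = f (pX z))
    (hsurj : Function.Surjective pY) {U : Set X} {V : Set Y}
    (hV : pY ⁻¹' V ⊆ ft '' (pX ⁻¹' U)) : V ⊆ f '' U := by
  calc
    V = pY '' (pY ⁻¹' V) := (image_preimage_eq V hsurj).symm
    _ ⊆ pY '' (ft '' (pX ⁻¹' U)) := image_mono hV
    _ = f '' (pX '' (pX ⁻¹' U)) := image_comm hcomm
    _ ⊆ f '' U := image_mono (image_preimage_subset pX U)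

variable [TopologicalSpace X] [TopologicalSpace Y] [TopologicalSpace Xt] [TopologicalSpace Yt]
  [RegularSpace X] {x : X} {U : Set X}

theorem SquareSkeletalAt.exists_isOpen_preimage_subset_image
    (hsk : SquareSkeletalAt ft f pX pY x) (hpX : Continuous pX) (hclosed : IsClosedMap ft)
    (hU : U ∈ 𝓝 x) :
    ∃ V : Set Y, IsOpen V ∧ V.Nonempty ∧ pY ⁻¹' V ⊆ ft '' (pX ⁻¹' U) := by
  obtain ⟨C, hCx, hC, hCU⟩ := exists_mem_nhds_isClosed_subset hU
  obtain ⟨V, hVopen, hVne, -, hVC⟩ := hsk C hCx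
  have himage : IsClosed (ft '' (pX ⁻¹' C)) := hclosed _ (hC.preimage hpX)
  rw [himage.closure_eq] at hVC
  exact ⟨V, hVopen, hVne, hVC.trans (image_mono (preimage_mono hCU))⟩

theorem squareSkeletal_claim2_general (hf : Continuous f) (hpX : Continuous pX)
    (hcomm : ∀ z, pY (ft z) = f (pX z)) (hclosed : IsClosedMap ft)
    (hsurj : Function.Surjective pY) (hsk : SquareSkeletalAt ft f pX pY x) (hU : U ∈ 𝓝 x) :
    ∃ W : Set X, IsOpen W ∧ W.Nonempty ∧ W ⊆ U ∧ IsOpen (f '' W) ∧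
      ft '' (pX ⁻¹' W) = pY ⁻¹' (f '' W) := by
  obtain ⟨V, hVopen, hVne, hV⟩ :=
    hsk.exists_isOpen_preimage_subset_image hpX hclosed (interior_mem_nhds.2 hU)
  have himage : f '' (interior U ∩ f ⁻¹' V) = V := by
    rw [image_inter_preimage, inter_eq_right]
    exact subset_image_of_preimage_subset_image_preimage hcomm hsurj hV
  refine ⟨interior U ∩ f ⁻¹' V, isOpen_interior.inter (hVopen.preimage hf), ?_,
    inter_subset_left.trans interior_subset, ?_, ?_⟩
  · rwa [← image_nonempty (f := f), himage]
  · rwa [himage]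
  · rw [himage, image_preimage_inter_preimage_of_comm hcomm, inter_eq_right.2 hV]

end CommutativeSquare

/-- If `𝒟` is a skeletal commutative square of continuous maps (with `pY ∘ f̃ = f ∘ pX`),
`f̃` is a closed map, `pY` is surjective and `X` is regular, then each non-empty open
`U ⊆ X` contains a non-empty open `W ⊆ U` such that `f '' W` is open in `Y` and
`f̃ '' (pX ⁻¹' W) = pY ⁻¹' (f '' W)`. -/
theorem squareSkeletal_claim2
    {X Y Xt Yt : Type*} [TopologicalSpace X] [TopologicalSpace Y]
    [TopologicalSpace Xt] [TopologicalSpace Yt] [RegularSpace X]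
    (ft : Xt → Yt) (f : X → Y) (pX : Xt → X) (pY : Yt → Y)
    (hft : Continuous ft) (hf : Continuous f) (hpX : Continuous pX) (hpY : Continuous pY)
    (hcomm : ∀ z : Xt, pY (ft z) = f (pX z))
    (hclosed : IsClosedMap ft) (hsurj : Function.Surjective pY)
    (hsk : ∀ x : X, SquareSkeletalAt ft f pX pY x) :
    ∀ U : Set X, IsOpen U → U.Nonempty →
      ∃ W : Set X, IsOpen W ∧ W.Nonempty ∧ W ⊆ U ∧ IsOpen (f '' W) ∧
        ft '' (pX ⁻¹' W) = pY ⁻¹' (f '' W) := by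
  rintro U hU ⟨x, hx⟩
  exact squareSkeletal_claim2_general hf hpX hcomm hclosed hsurj (hsk x) (hU.mem_nhds hx)
end

section
/- Let {f_α}_{α∈A} : 𝒮_X → 𝒮_Y be a morphism between inverse spectra 𝒮_X = {X_α, p_α^β, A} and 𝒮_Y = {Y_α, π_α^β, A} with surjective limit projections. Let α ∈ A and let κ = πw(Y_α) be the π-weight of Y_α. If the index set A is κ-directed and for every β ≥ α in A the bonding ↓_α^β-square is skeletal, then the limit ↓α-square is skeletal. -/
open Set Topology

universe u

/-- A continuous map `f : X → Y` is *skeletal* if for every non-empty open `U ⊆ X` the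
closure of `f(U)` has non-empty interior. -/
def Skeletal {X Y : Type*} [TopologicalSpace X] [TopologicalSpace Y] (f : X → Y) : Prop :=
  ∀ U : Set X, IsOpen U → U.Nonempty → (interior (closure (f '' U))).Nonempty

/-- A commutative square (top map `g' : X' → Y'`, bottom map `g : X → Y`, vertical maps
`qX : X' → X`, `qY : Y' → Y`) is *skeletal* if for each point `x ∈ X` and each neighborhood
`U` of `x` there is a non-empty open `V ⊆ Y` with `V ⊆ cl (g '' U)` and
`qY ⁻¹' V ⊆ cl (g' '' (qX ⁻¹' U))`. -/
def SkeletalSquare {X Y X' Y' : Type*} [TopologicalSpace X] [TopologicalSpace Y]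
    [TopologicalSpace X'] [TopologicalSpace Y']
    (g' : X' → Y') (g : X → Y) (qX : X' → X) (qY : Y' → Y) : Prop :=
  ∀ x : X, ∀ U ∈ 𝓝 x, ∃ V : Set Y, IsOpen V ∧ V.Nonempty ∧ V ⊆ closure (g '' U) ∧
    qY ⁻¹' V ⊆ closure (g' '' (qX ⁻¹' U))

/-- An *inverse spectrum* over a partially ordered index set `A`: topological spaces `X a`
together with continuous bonding maps `bond h : X b → X a` for `h : a ≤ b`, satisfying the
usual identity and composition laws. -/
structure InvSpec (A : Type u) [PartialOrder A] : Type (u + 1) where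
  X : A → Type u
  [topX : ∀ a, TopologicalSpace (X a)]
  bond : ∀ {a b : A}, a ≤ b → X b → X a
  bond_cont : ∀ {a b : A} (h : a ≤ b), Continuous (bond h)
  bond_refl : ∀ (a : A) (x : X a), bond le_rfl x = x
  bond_comp : ∀ {a b c : A} (hab : a ≤ b) (hbc : b ≤ c) (x : X c),
    bond hab (bond hbc x) = bond (hab.trans hbc) x

attribute [instance] InvSpec.topX

variable {A : Type u} [PartialOrder A]

/-- The limit `lim 𝒮` of an inverse spectrum, as the set of threads in the product. -/
def InvSpec.limitSet (S : InvSpec A) : Set (∀ a, S.X a) :=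
  {x | ∀ (a b : A) (h : a ≤ b), S.bond h (x b) = x a}

/-- The limit projection `p_a : lim 𝒮 → X a`. -/
def InvSpec.proj (S : InvSpec A) (a : A) : S.limitSet → S.X a := fun x => x.1 a

/-- A *morphism* between two inverse spectra over the same index set: a family of continuous
maps `f a : X a → Y a` commuting with the bonding maps. -/
structure SpecMor (S T : InvSpec A) where
  maps : ∀ a, S.X a → T.X a
  maps_cont : ∀ a, Continuous (maps a)
  comm : ∀ {a b : A} (h : a ≤ b) (x : S.X b), maps a (S.bond h x) = T.bond h (maps b x)

/-- The limit map `lim f_a : lim 𝒮_X → lim 𝒮_Y` of a morphism of spectra. -/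
def SpecMor.limMap {S T : InvSpec A} (F : SpecMor S T) : S.limitSet → T.limitSet :=
  fun x => ⟨fun a => F.maps a (x.1 a),
    fun a b h => by rw [← F.comm h (x.1 b), x.2 a b h]⟩

/-- The *limit `↓a`-square* of a morphism (top map `lim f`, bottom map `f a`, verticals the
limit projections) is skeletal. -/
def LimitSquareSkeletal {S T : InvSpec A} (F : SpecMor S T) (a : A) : Prop :=
  SkeletalSquare F.limMap (F.maps a) (S.proj a) (T.proj a)

/-- The *bonding `↓_a^b`-square* of a morphism (top map `f b`, bottom map `f a`, verticals
the bonding maps) is skeletal. -/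
def BondingSquareSkeletal {S T : InvSpec A} (F : SpecMor S T) {a b : A} (h : a ≤ b) : Prop :=
  SkeletalSquare (F.maps b) (F.maps a) (S.bond h) (T.bond h)

/-- A family of non-empty open sets is a *π-base* if every non-empty open set contains a
member of the family. -/
def IsPiBase {Z : Type*} [TopologicalSpace Z] (B : Set (Set Z)) : Prop :=
  (∀ U ∈ B, IsOpen U ∧ U.Nonempty) ∧
  ∀ U : Set Z, IsOpen U → U.Nonempty → ∃ V ∈ B, V ⊆ U

/-- The *π-weight* of a space: the smallest cardinality of a π-base. -/
noncomputable def piWeight (Z : Type u) [TopologicalSpace Z] : Cardinal.{u} :=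
  ⨅ B : {B : Set (Set Z) // IsPiBase B}, Cardinal.mk B.1

/-- A partially ordered set is *κ-directed* if every subset of cardinality `≤ κ` has an
upper bound. -/
def CardDirected (A : Type u) [PartialOrder A] (κ : Cardinal.{u}) : Prop :=
  ∀ K : Set A, Cardinal.mk K ≤ κ → ∃ ub : A, ∀ k ∈ K, k ≤ ub

/-- A partially ordered set is *ω-complete* if every (non-empty) countable chain has a least
upper bound. -/
def OmegaComplete (A : Type u) [PartialOrder A] : Prop :=
  ∀ C : Set A, C.Countable → C.Nonempty → IsChain (· ≤ ·) C → ∃ b : A, IsLUB C b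

/-- The limit of the restriction of a spectrum to a subset `C` of the index set. -/
def InvSpec.limitSetOn (S : InvSpec A) (C : Set A) : Set (∀ c : C, S.X c) :=
  {x | ∀ (c d : C) (h : (c : A) ≤ (d : A)), S.bond h (x d) = x c}

/-- The canonical map `X g → lim {X a, a ∈ C}` when `g` is a least upper bound of `C`. -/
def InvSpec.toLimitOn (S : InvSpec A) {C : Set A} {g : A} (hg : IsLUB C g) :
    S.X g → S.limitSetOn C :=
  fun xg => ⟨fun c => S.bond (hg.1 c.2) xg, fun c d h => S.bond_comp h (hg.1 d.2) xg⟩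

/-- A spectrum is *continuous* (τ-continuous) if for every non-empty directed subset `C` of
the index set having a least upper bound `g`, the canonical map `X g → lim {X a, a ∈ C}` is
a homeomorphism. -/
def InvSpec.IsContinuousSpectrum (S : InvSpec A) : Prop :=
  ∀ (C : Set A) (g : A), C.Nonempty → DirectedOn (· ≤ ·) C → ∀ hg : IsLUB C g,
    IsHomeomorph (S.toLimitOn hg)

/-- A *πτ-spectrum*: all spaces have π-weight `≤ τ`, the index set is τ-directed and
ω-complete, and the spectrum is τ-continuous. -/
def IsPiTauSpectrum (τ : Cardinal.{u}) (S : InvSpec A) : Prop :=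
  (∀ a : A, piWeight (S.X a) ≤ τ) ∧ CardDirected A τ ∧ OmegaComplete A ∧
    S.IsContinuousSpectrum

/-- A subset `C` of a directed poset is *cofinal* if every element of the poset is below
some element of `C`. -/
def IsCofinalSub {A : Type u} [PartialOrder A] (C : Set A) : Prop :=
  ∀ a : A, ∃ b ∈ C, a ≤ b

/-- A subset `C` is *τ-closed* (equivalently ω-closed) if for each (non-empty) directed
subset `D ⊆ C` having a least upper bound in `A`, this least upper bound belongs to `C`. -/
def IsSupClosed {A : Type u} [PartialOrder A] (C : Set A) : Prop :=
  ∀ D ⊆ C, D.Nonempty → DirectedOn (· ≤ ·) D → ∀ g : A, IsLUB D g → g ∈ C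

/-!
Put `K = (lim f) (p_a⁻¹ U)`. A thread `y` lies in `cl K` exactly when `y_b ∈ cl (π_b K)` for every
index `b`, and this condition becomes stronger as `b` grows. For each single `b`, skeletality of a
bonding square yields a member `V` of a π-base of `Y a` such that all threads over `V` satisfy the
condition at `b`. If each of the at most `κ` many members of the π-base failed at some index, they
would all fail at a common upper bound of these indices; hence one `V` works for all `b` at once.
-/

theorem exists_isPiBase_mk_eq_piWeight (Z : Type u) [TopologicalSpace Z] :
    ∃ B : Set (Set Z), IsPiBase B ∧ Cardinal.mk B = piWeight Z := by
  have : Nonempty {B : Set (Set Z) // IsPiBase B} :=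
    ⟨⟨{U | IsOpen U ∧ U.Nonempty}, fun _ h => h, fun U ho hn => ⟨U, ⟨ho, hn⟩, Subset.rfl⟩⟩⟩
  obtain ⟨B, hB⟩ := ciInf_mem fun B : {B : Set (Set Z) // IsPiBase B} => Cardinal.mk B.1
  exact ⟨B.1, B.2, hB⟩

theorem CardDirected.exists_forall_of_forall_exists {ι : Type u} {P : ι → A → Prop}
    (hA : CardDirected A (Cardinal.mk ι)) (hP : ∀ i, Antitone (P i)) (h : ∀ b, ∃ i, P i b) :
    ∃ i, ∀ b, P i b := by
  by_contra! hfail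
  choose b hb using hfail
  obtain ⟨c, hc⟩ := hA (range b) Cardinal.mk_range_le
  obtain ⟨i, hi⟩ := h c
  exact hb i (hP i (hc _ (mem_range_self i)) hi)

namespace InvSpec

variable (S : InvSpec A)

theorem bond_proj {a b : A} (h : a ≤ b) (x : S.limitSet) : S.bond h (S.proj b x) = S.proj a x :=
  x.2 a b h

theorem nhds_limitSet (x : S.limitSet) : 𝓝 x = ⨅ b, (𝓝 (S.proj b x)).comap (S.proj b) := by
  simp only [nhds_subtype, nhds_pi, Filter.pi, Filter.comap_iInf, Filter.comap_comap]
  rfl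

theorem antitone_comap_proj_nhds (x : S.limitSet) :
    Antitone fun b => (𝓝 (S.proj b x)).comap (S.proj b) := by
  intro b c hbc
  have hbond : Filter.Tendsto (S.bond hbc) (𝓝 (S.proj c x)) (𝓝 (S.proj b x)) := by
    simpa only [S.bond_proj] using (S.bond_cont hbc).tendsto (S.proj c x)
  have hproj : S.proj b = S.bond hbc ∘ S.proj c := funext fun z => (S.bond_proj hbc z).symm
  simpa only [hproj, Filter.comap_comap] using Filter.comap_mono hbond.le_comap

theorem antitone_proj_mem_closure_image (K : Set S.limitSet) (x : S.limitSet) :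
    Antitone fun b => S.proj b x ∈ closure (S.proj b '' K) := by
  intro b c hbc hx
  rw [← S.bond_proj hbc x]
  refine map_mem_closure (S.bond_cont hbc) hx ?_
  rintro _ ⟨z, hz, rfl⟩
  exact ⟨z, hz, (S.bond_proj hbc z).symm⟩

theorem mem_closure_of_forall_proj_mem_closure_image [Nonempty A] [IsDirectedOrder A]
    {K : Set S.limitSet} {x : S.limitSet} (hx : ∀ b, S.proj b x ∈ closure (S.proj b '' K)) :
    x ∈ closure K := by
  rw [mem_closure_iff_nhds]
  intro O hO
  rw [S.nhds_limitSet, Filter.mem_iInf_of_directed (S.antitone_comap_proj_nhds x).directed_ge] at hO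
  obtain ⟨b, W, hW, hWO⟩ := hO
  obtain ⟨_, hzW, z, hzK, rfl⟩ := mem_closure_iff_nhds.1 (hx b) W hW
  exact ⟨z, hWO hzW, hzK⟩

end InvSpec

theorem SpecMor.proj_image_limMap_image {S T : InvSpec A} (F : SpecMor S T) {a b : A}
    (hab : a ≤ b) (hb : Function.Surjective (S.proj b)) (U : Set (S.X a)) :
    T.proj b '' (F.limMap '' (S.proj a ⁻¹' U)) = F.maps b '' (S.bond hab ⁻¹' U) := by
  have hproj : S.proj a = S.bond hab ∘ S.proj b := funext fun z => (S.bond_proj hab z).symm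
  calc T.proj b '' (F.limMap '' (S.proj a ⁻¹' U))
      = F.maps b '' (S.proj b '' (S.proj a ⁻¹' U)) := by simp only [image_image]; rfl
    _ = F.maps b '' (S.bond hab ⁻¹' U) := by
      rw [hproj, preimage_comp, image_preimage_eq _ hb]

theorem BondingSquareSkeletal.exists_isOpen_forall_proj_mem_closure_image {S T : InvSpec A}
    {F : SpecMor S T} {a b : A} {hab : a ≤ b} (hF : BondingSquareSkeletal F hab)
    (hb : Function.Surjective (S.proj b)) {x : S.X a} {U : Set (S.X a)} (hU : U ∈ 𝓝 x) :
    ∃ V : Set (T.X a), IsOpen V ∧ V.Nonempty ∧ V ⊆ closure (F.maps a '' U) ∧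
      ∀ y, T.proj a y ∈ V →
        T.proj b y ∈ closure (T.proj b '' (F.limMap '' (S.proj a ⁻¹' U))) := by
  obtain ⟨V, hVo, hVn, hVU, hVb⟩ := hF x U hU
  refine ⟨V, hVo, hVn, hVU, fun y hy => ?_⟩
  rw [F.proj_image_limMap_image hab hb]
  apply hVb
  rwa [mem_preimage, T.bond_proj]

theorem limitSquareSkeletal_of_bondingSquares_general [IsDirectedOrder A]
    {S T : InvSpec A} (F : SpecMor S T) (hS : ∀ a : A, Function.Surjective (S.proj a))
    (a : A) (hκ : CardDirected A (piWeight (T.X a)))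
    (hsq : ∀ b : A, ∀ h : a ≤ b, BondingSquareSkeletal F h) :
    LimitSquareSkeletal F a := by
  intro x U hU
  obtain ⟨B, hB, hcard⟩ := exists_isPiBase_mk_eq_piWeight (T.X a)
  let K := F.limMap '' (S.proj a ⁻¹' U)
  obtain ⟨V, hV⟩ : ∃ V : B, ∀ b, V.1 ⊆ closure (F.maps a '' U) ∧
      ∀ y, T.proj a y ∈ V.1 → T.proj b y ∈ closure (T.proj b '' K) := by
    refine (hcard ▸ hκ).exists_forall_of_forall_exists (fun V b c hbc hc => ⟨hc.1, fun y hy =>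
      T.antitone_proj_mem_closure_image K y hbc (hc.2 y hy)⟩) fun b => ?_
    obtain ⟨c, hac, hbc⟩ := exists_ge_ge a b
    obtain ⟨W, hWo, hWn, hWU, hWc⟩ :=
      (hsq c hac).exists_isOpen_forall_proj_mem_closure_image (hS c) hU
    obtain ⟨V, hVB, hVW⟩ := hB.2 W hWo hWn
    exact ⟨⟨V, hVB⟩, hVW.trans hWU, fun y hy =>
      T.antitone_proj_mem_closure_image K y hbc (hWc y (hVW hy))⟩
  have : Nonempty A := ⟨a⟩
  exact ⟨V, (hB.1 V V.2).1, (hB.1 V V.2).2, (hV a).1, fun y hy =>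
    T.mem_closure_of_forall_proj_mem_closure_image fun b => (hV b).2 y hy⟩

/-- Let `F` be a morphism between inverse spectra with surjective limit projections, let
`a` be an index and `κ = πw(Y a)` the π-weight of `Y a`.  If the index set is κ-directed and
all bonding `↓_a^b`-squares (`b ≥ a`) are skeletal, then the limit `↓a`-square is
skeletal. -/
theorem limitSquareSkeletal_of_bondingSquares {A : Type u} [PartialOrder A] [Nonempty A]
    (hdir : ∀ a b : A, ∃ c : A, a ≤ c ∧ b ≤ c)
    (S T : InvSpec A) (F : SpecMor S T)
    (hS : ∀ a : A, Function.Surjective (S.proj a))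
    (hT : ∀ a : A, Function.Surjective (T.proj a))
    (a : A) (hκ : CardDirected A (piWeight (T.X a)))
    (hsq : ∀ b : A, ∀ h : a ≤ b, BondingSquareSkeletal F h) :
    LimitSquareSkeletal F a := by
  have : IsDirectedOrder A := ⟨hdir⟩
  exact limitSquareSkeletal_of_bondingSquares_general F hS a hκ hsq
end

section
/- Let {f_α}_{α∈A} : 𝒮_X → 𝒮_Y be a morphism between two πτ-spectra 𝒮_X = {X_α, p_α^β, A} and 𝒮_Y = {Y_α, π_α^β, A} with surjective limit projections, and suppose the limit map lim f_α : lim 𝒮_X → lim 𝒮_Y is skeletal. Then the set B = {α ∈ A : the limit ↓α-square of the morphism is skeletal} is τ-closed in A: for each directed subset D ⊆ B that has a least upper bound sup D in A, one has sup D ∈ B. -/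
open Set Topology

universe u

variable {A : Type u} [PartialOrder A]

/-!
When `D` is directed with supremum `g`, continuity of `𝒮_X` makes the sets `(p_d^g)⁻¹ W` with
`d ∈ D` a neighborhood base of `X_g`. A witness `V ⊆ Y_d` of skeletality of the `↓d`-square at `W`
then pulls back to the witness `(π_d^g)⁻¹ V` for the `↓g`-square at `(p_d^g)⁻¹ W`, because limit
projections factor through bonding maps. Density of the image of `π_g` turns the inclusion
upstairs, in `lim 𝒮_Y`, into the inclusion downstairs, in `Y_g`.
-/

section SkeletalSquare

variable {X Y X' Y' : Type*} [TopologicalSpace Y] [TopologicalSpace Y']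
  {g' : X' → Y'} {g : X → Y} {qX : X' → X} {qY : Y' → Y}

theorem subset_closure_image_of_preimage_subset (hcomm : qY ∘ g' = g ∘ qX)
    (hcont : Continuous qY) (hdense : DenseRange qY) {U : Set X} {V : Set Y} (hV : IsOpen V)
    (hVU : qY ⁻¹' V ⊆ closure (g' '' (qX ⁻¹' U))) : V ⊆ closure (g '' U) := by
  have himage : qY '' (g' '' (qX ⁻¹' U)) ⊆ g '' U := by
    rw [← image_comp, hcomm, image_comp]
    exact image_mono (image_preimage_subset qX U)
  calc V ⊆ closure (V ∩ range qY) := hdense.open_subset_closure_inter hV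
    _ = closure (qY '' (qY ⁻¹' V)) := by rw [image_preimage_eq_inter_range]
    _ ⊆ closure (qY '' closure (g' '' (qX ⁻¹' U))) := closure_mono (image_mono hVU)
    _ ⊆ closure (qY '' (g' '' (qX ⁻¹' U))) :=
      closure_minimal (image_closure_subset_closure_image hcont) isClosed_closure
    _ ⊆ closure (g '' U) := closure_mono himage

theorem skeletalSquare_iff_of_denseRange [TopologicalSpace X] [TopologicalSpace X']
    (hcomm : qY ∘ g' = g ∘ qX) (hcont : Continuous qY) (hdense : DenseRange qY) :
    SkeletalSquare g' g qX qY ↔ ∀ x : X, ∀ U ∈ 𝓝 x, ∃ V : Set Y, IsOpen V ∧ V.Nonempty ∧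
      qY ⁻¹' V ⊆ closure (g' '' (qX ⁻¹' U)) := by
  refine forall₃_congr fun x U _ => exists_congr fun V => ?_
  refine and_congr_right fun hV => and_congr_right fun _ => and_iff_right_of_imp ?_
  exact subset_closure_image_of_preimage_subset hcomm hcont hdense hV

end SkeletalSquare

namespace InvSpec

variable (S : InvSpec A)

theorem continuous_proj (a : A) : Continuous (S.proj a) :=
  (continuous_apply a).comp continuous_subtype_val

theorem preimage_proj_preimage_bond {a b : A} (h : a ≤ b) (V : Set (S.X a)) :
    S.proj b ⁻¹' (S.bond h ⁻¹' V) = S.proj a ⁻¹' V := by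
  ext x
  exact iff_of_eq (congrArg (· ∈ V) (x.2 a b h))

theorem comap_bond_nhds_anti {a b c : A} (hab : a ≤ b) (hbc : b ≤ c) (x : S.X c) :
    Filter.comap (S.bond hbc) (𝓝 (S.bond hbc x)) ≤
      Filter.comap (S.bond (hab.trans hbc)) (𝓝 (S.bond (hab.trans hbc) x)) := by
  have hfactor : S.bond (hab.trans hbc) = S.bond hab ∘ S.bond hbc :=
    funext fun y => (S.bond_comp hab hbc y).symm
  rw [hfactor, ← Filter.comap_comap]
  exact Filter.comap_mono (S.bond_cont hab).continuousAt.le_comap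

variable {S} {D : Set A} {g : A} {hg : IsLUB D g}

theorem nhds_eq_iInf_comap_bond (hind : IsInducing (S.toLimitOn hg)) (x : S.X g) :
    𝓝 x = ⨅ d : D, Filter.comap (S.bond (hg.1 d.2)) (𝓝 (S.bond (hg.1 d.2) x)) := by
  rw [(IsInducing.subtypeVal.comp hind).nhds_eq_comap, nhds_pi, Filter.pi, Filter.comap_iInf]
  simp only [Filter.comap_comap]
  rfl

theorem mem_nhds_iff_exists_bond_preimage_subset (hind : IsInducing (S.toLimitOn hg))
    (hne : D.Nonempty) (hD : DirectedOn (· ≤ ·) D) {x : S.X g} {U : Set (S.X g)} :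
    U ∈ 𝓝 x ↔
      ∃ d, ∃ hd : d ∈ D, ∃ W ∈ 𝓝 (S.bond (hg.1 hd) x), S.bond (hg.1 hd) ⁻¹' W ⊆ U := by
  have : Nonempty D := hne.to_subtype
  have hdir : Directed (· ≥ ·) fun d : D =>
      Filter.comap (S.bond (hg.1 d.2)) (𝓝 (S.bond (hg.1 d.2) x)) := by
    rintro ⟨a, ha⟩ ⟨b, hb⟩
    obtain ⟨c, hc, hac, hbc⟩ := hD a ha b hb
    exact ⟨⟨c, hc⟩, S.comap_bond_nhds_anti hac (hg.1 hc) x, S.comap_bond_nhds_anti hbc (hg.1 hc) x⟩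
  rw [nhds_eq_iInf_comap_bond hind, Filter.mem_iInf_of_directed hdir, Subtype.exists]
  rfl

end InvSpec

section Morphism

variable {S T : InvSpec A} (F : SpecMor S T)

theorem SpecMor.proj_comp_limMap (a : A) : T.proj a ∘ F.limMap = F.maps a ∘ S.proj a :=
  rfl

variable {F}

theorem limitSquareSkeletal_iff_of_denseRange {a : A} (hT : DenseRange (T.proj a)) :
    LimitSquareSkeletal F a ↔ ∀ x : S.X a, ∀ U ∈ 𝓝 x, ∃ V : Set (T.X a), IsOpen V ∧
      V.Nonempty ∧ T.proj a ⁻¹' V ⊆ closure (F.limMap '' (S.proj a ⁻¹' U)) :=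
  skeletalSquare_iff_of_denseRange (F.proj_comp_limMap a) (T.continuous_proj a) hT

theorem limitSquareSkeletal_of_isLUB (hT : ∀ a, DenseRange (T.proj a)) {D : Set A} {g : A}
    (hne : D.Nonempty) (hD : DirectedOn (· ≤ ·) D) (hg : IsLUB D g)
    (hind : IsInducing (S.toLimitOn hg)) (hsq : ∀ d ∈ D, LimitSquareSkeletal F d) :
    LimitSquareSkeletal F g := by
  rw [limitSquareSkeletal_iff_of_denseRange (hT g)]
  intro x U hU
  obtain ⟨d, hd, W, hW, hWU⟩ :=
    (InvSpec.mem_nhds_iff_exists_bond_preimage_subset hind hne hD).1 hU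
  have hdg : d ≤ g := hg.1 hd
  obtain ⟨V, hVo, hVne, -, hVW⟩ := hsq d hd _ W hW
  refine ⟨T.bond hdg ⁻¹' V, hVo.preimage (T.bond_cont hdg), ?_, ?_⟩
  · obtain ⟨y, hy⟩ := (hT d).exists_mem_open hVo hVne
    exact ⟨T.proj g y, (T.preimage_proj_preimage_bond hdg V).ge hy⟩
  · calc T.proj g ⁻¹' (T.bond hdg ⁻¹' V) = T.proj d ⁻¹' V := T.preimage_proj_preimage_bond hdg V
      _ ⊆ closure (F.limMap '' (S.proj d ⁻¹' W)) := hVW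
      _ = closure (F.limMap '' (S.proj g ⁻¹' (S.bond hdg ⁻¹' W))) := by
        rw [S.preimage_proj_preimage_bond hdg]
      _ ⊆ closure (F.limMap '' (S.proj g ⁻¹' U)) :=
        closure_mono (image_mono (preimage_mono hWU))

end Morphism

theorem supClosed_limitSquareSkeletal_general {S T : InvSpec A} (F : SpecMor S T)
    (hS : S.IsContinuousSpectrum) (hT : ∀ a : A, DenseRange (T.proj a)) :
    IsSupClosed {a : A | LimitSquareSkeletal F a} :=
  fun D hDB hne hD g hg =>
    limitSquareSkeletal_of_isLUB hT hne hD hg (hS D g hne hD hg).isInducing hDB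

/-- If the limit map of a morphism between two πτ-spectra with surjective limit projections
is skeletal, then the set `B = {a : the limit ↓a-square is skeletal}` is τ-closed in the
index set: the least upper bound of any (non-empty) directed subset of `B` that has a least
upper bound belongs to `B`. -/
theorem supClosed_limitSquareSkeletal {A : Type u} [PartialOrder A] [Nonempty A]
    (τ : Cardinal.{u}) (hτ : Cardinal.aleph0 ≤ τ) (S T : InvSpec A) (F : SpecMor S T)
    (hSτ : IsPiTauSpectrum τ S) (hTτ : IsPiTauSpectrum τ T)
    (hS : ∀ a : A, Function.Surjective (S.proj a))
    (hT : ∀ a : A, Function.Surjective (T.proj a))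
    (hsk : Skeletal F.limMap) :
    IsSupClosed {a : A | LimitSquareSkeletal F a} :=
  supClosed_limitSquareSkeletal_general F hSτ.2.2.2 fun a => (hT a).denseRange
end

section
/- Let {f_α}_{α∈A} : 𝒮_X → 𝒮_Y be a morphism between two πτ-spectra with surjective limit projections, let f = lim f_α be the limit map, let o ∈ A and let U_o ⊆ X_o be a non-empty open set such that the image f(U) of U = p_o⁻¹(U_o) is nowhere dense in lim 𝒮_Y, and let C be a cofinal subset of A. Then for any index α ∈ C with α ≥ o there is an index β ∈ C with β ≥ α such that for any non-empty open set V_α ⊆ Y_α there is a non-empty open set W_β ⊆ Y_β with π_β⁻¹(W_β) ⊆ π_α⁻¹(V_α) \\ f(U). -/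
open Set Topology

universe u

variable {A : Type u} [PartialOrder A]

/-!
Over a directed index set the cylinders `π_c⁻¹(W)` form a base of the limit, and a cylinder over
`c` is also a cylinder over every larger index. A nowhere dense `N` therefore leaves, inside
`π_a⁻¹(V)` for each member `V` of a π-base of `Y a` of minimal size, room for a non-empty cylinder
disjoint from `N`. There are at most `πw(Y a)` of these cylinders, so a single index in `C`
dominates all the indices they live over.
-/

namespace CardDirected

variable {κ μ : Cardinal.{u}}

theorem mono (hκμ : κ ≤ μ) (hA : CardDirected A μ) : CardDirected A κ :=
  fun K hK => hA K (hK.trans hκμ)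

theorem exists_forall_le (hA : CardDirected A κ) {ι : Type u} (hι : Cardinal.mk ι ≤ κ)
    (c : ι → A) : ∃ d, ∀ i, c i ≤ d := by
  obtain ⟨d, hd⟩ := hA (range c) (Cardinal.mk_range_le.trans hι)
  exact ⟨d, fun i => hd _ (mem_range_self i)⟩

theorem isDirectedOrder (hκ : 2 ≤ κ) (hA : CardDirected A κ) : IsDirectedOrder A where
  directed a b := by
    have hcard : Cardinal.mk ({a, b} : Set A) ≤ 2 := by
      simpa [one_add_one_eq_two] using Cardinal.mk_insert_le (s := {b}) (a := a)
    obtain ⟨d, hd⟩ := hA {a, b} (hcard.trans hκ)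
    exact ⟨d, hd a (by simp), hd b (by simp)⟩

end CardDirected

theorem nonempty_sdiff_closure_of_isNowhereDense {Z : Type*} [TopologicalSpace Z] {N O : Set Z}
    (hN : IsNowhereDense N) (hO : IsOpen O) (hne : O.Nonempty) : (O \ closure N).Nonempty :=
  (interior_eq_empty_iff_dense_compl.1 hN).inter_open_nonempty O hO hne

namespace InvSpec

variable {T : InvSpec A} {a b : A} {O O' : Set T.limitSet}

theorem continuous_proj_s16 (T : InvSpec A) (a : A) : Continuous (T.proj a) :=
  (continuous_apply a).comp continuous_subtype_val

theorem bond_proj_s16 (h : a ≤ b) (x : T.limitSet) : T.bond h (T.proj b x) = T.proj a x :=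
  x.2 a b h

theorem proj_preimage_bond_preimage (h : a ≤ b) (W : Set (T.X a)) :
    T.proj b ⁻¹' (T.bond h ⁻¹' W) = T.proj a ⁻¹' W := by
  ext x
  simp only [mem_preimage, bond_proj_s16]

theorem isTopologicalBasis_proj_preimage [Nonempty A] [IsDirectedOrder A] (T : InvSpec A) :
    TopologicalSpace.IsTopologicalBasis
      {O | ∃ (c : A) (W : Set (T.X c)), IsOpen W ∧ T.proj c ⁻¹' W = O} := by
  refine TopologicalSpace.isTopologicalBasis_of_isOpen_of_nhds ?_ fun y O hy hO => ?_
  · rintro _ ⟨c, W, hW, rfl⟩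
    exact hW.preimage (T.continuous_proj_s16 c)
  obtain ⟨G, hG, rfl⟩ := isOpen_induced_iff.1 hO
  obtain ⟨I, u, hu, hIu⟩ := isOpen_pi_iff.1 hG y.1 hy
  obtain ⟨c, hc⟩ := I.exists_le
  refine ⟨_, ⟨c, ⋂ i : I, T.bond (hc i i.2) ⁻¹' u i, ?_, rfl⟩, ?_, fun z hz => hIu fun i hi => ?_⟩
  · exact isOpen_iInter_of_finite fun i => (hu i i.2).1.preimage (T.bond_cont _)
  · simp only [mem_preimage, mem_iInter, bond_proj_s16]
    exact fun i => (hu i i.2).2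
  · simp only [mem_preimage, mem_iInter, bond_proj_s16] at hz
    exact hz ⟨i, hi⟩

/-- `O` contains a non-empty open cylinder `π_b⁻¹(W)` over the index `b`. Non-emptiness is asked of
the cylinder, not of `W`: any of its points then witnesses non-emptiness over larger indices. -/
def ContainsCylinder (T : InvSpec A) (b : A) (O : Set T.limitSet) : Prop :=
  ∃ W : Set (T.X b), IsOpen W ∧ (T.proj b ⁻¹' W).Nonempty ∧ T.proj b ⁻¹' W ⊆ O

theorem ContainsCylinder.mono (hO : T.ContainsCylinder b O) (hOO' : O ⊆ O') :
    T.ContainsCylinder b O' :=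
  let ⟨W, hW, hne, hWO⟩ := hO
  ⟨W, hW, hne, hWO.trans hOO'⟩

theorem ContainsCylinder.of_le (hO : T.ContainsCylinder a O) (h : a ≤ b) :
    T.ContainsCylinder b O := by
  obtain ⟨W, hW, hne, hWO⟩ := hO
  refine ⟨T.bond h ⁻¹' W, hW.preimage (T.bond_cont h), ?_, ?_⟩ <;>
    rwa [proj_preimage_bond_preimage]

theorem exists_containsCylinder [Nonempty A] [IsDirectedOrder A] (hO : IsOpen O)
    (hne : O.Nonempty) : ∃ c, T.ContainsCylinder c O := by
  obtain ⟨_, ⟨c, W, hW, rfl⟩, hWne, hWO⟩ :=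
    T.isTopologicalBasis_proj_preimage.exists_nonempty_subset hne hO
  exact ⟨c, W, hW, hWne, hWO⟩

theorem exists_forall_containsCylinder [Nonempty A] [IsDirectedOrder A] {κ : Cardinal.{u}}
    (hA : CardDirected A κ) {ι : Type u} (hι : Cardinal.mk ι ≤ κ) {O : ι → Set T.limitSet}
    (hO : ∀ i, IsOpen (O i)) (hne : ∀ i, (O i).Nonempty) :
    ∃ d, ∀ i, T.ContainsCylinder d (O i) := by
  choose c hc using fun i => exists_containsCylinder (hO i) (hne i)
  obtain ⟨d, hd⟩ := hA.exists_forall_le hι c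
  exact ⟨d, fun i => (hc i).of_le (hd i)⟩

theorem exists_forall_containsCylinder_sdiff [IsDirectedOrder A]
    (hA : CardDirected A (piWeight (T.X a))) (ha : DenseRange (T.proj a)) {N : Set T.limitSet}
    (hN : IsNowhereDense N) :
    ∃ d, ∀ V : Set (T.X a), IsOpen V → V.Nonempty →
      T.ContainsCylinder d (T.proj a ⁻¹' V \ N) := by
  have : Nonempty A := ⟨a⟩
  obtain ⟨B, hB, hBcard⟩ := exists_isPiBase_mk_eq_piWeight (T.X a)
  have hopen (V : B) : IsOpen (T.proj a ⁻¹' V.1) := (hB.1 V V.2).1.preimage (T.continuous_proj_s16 a)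
  have hne (V : B) : (T.proj a ⁻¹' V.1).Nonempty :=
    ha.exists_mem_open (hB.1 V V.2).1 (hB.1 V V.2).2
  obtain ⟨d, hd⟩ := exists_forall_containsCylinder hA hBcard.le
    (fun V => (hopen V).sdiff isClosed_closure)
    (fun V => nonempty_sdiff_closure_of_isNowhereDense hN (hopen V) (hne V))
  refine ⟨d, fun V hV hVne => ?_⟩
  obtain ⟨V₀, hV₀, hV₀V⟩ := hB.2 V hV hVne
  exact (hd ⟨V₀, hV₀⟩).mono (sdiff_subset_sdiff (preimage_mono hV₀V) subset_closure)

end InvSpec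

theorem exists_avoiding_index_general [IsDirectedOrder A] (T : InvSpec A) (a : A)
    (hA : CardDirected A (piWeight (T.X a))) (ha : DenseRange (T.proj a)) {N : Set T.limitSet}
    (hN : IsNowhereDense N) {C : Set A} (hC : IsCofinalSub C) :
    ∃ b ∈ C, a ≤ b ∧ ∀ V : Set (T.X a), IsOpen V → V.Nonempty →
      ∃ W : Set (T.X b), IsOpen W ∧ W.Nonempty ∧ T.proj b ⁻¹' W ⊆ T.proj a ⁻¹' V \ N := by
  obtain ⟨d, hd⟩ := InvSpec.exists_forall_containsCylinder_sdiff hA ha hN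
  obtain ⟨e, hae, hde⟩ := exists_ge_ge a d
  obtain ⟨b, hbC, heb⟩ := hC e
  refine ⟨b, hbC, hae.trans heb, fun V hV hVne => ?_⟩
  obtain ⟨W, hW, hWne, hWV⟩ := (hd V hV hVne).of_le (hde.trans heb)
  exact ⟨W, hW, nonempty_of_nonempty_preimage hWne, hWV⟩

/-- Let `F` be a morphism between two πτ-spectra with surjective limit projections,
`f = lim f_a` its limit map, `o` an index and `U_o ⊆ X o` a non-empty open set such that
`f(U)`, with `U = p_o⁻¹(U_o)`, is nowhere dense in `lim 𝒮_Y`, and let `C ⊆ A` be cofinal.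
Then for any `a ∈ C` with `a ≥ o` there is `b ∈ C` with `b ≥ a` such that every non-empty
open `V ⊆ Y a` admits a non-empty open `W ⊆ Y b` with
`π_b⁻¹(W) ⊆ π_a⁻¹(V) \ f(U)`. -/
theorem exists_avoiding_index {A : Type u} [PartialOrder A] [Nonempty A]
    (τ : Cardinal.{u}) (hτ : Cardinal.aleph0 ≤ τ) (S T : InvSpec A) (F : SpecMor S T)
    (hSτ : IsPiTauSpectrum τ S) (hTτ : IsPiTauSpectrum τ T)
    (hS : ∀ a : A, Function.Surjective (S.proj a))
    (hT : ∀ a : A, Function.Surjective (T.proj a))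
    (o : A) (Uo : Set (S.X o)) (hUo : IsOpen Uo) (hUone : Uo.Nonempty)
    (hnd : IsNowhereDense (F.limMap '' (S.proj o ⁻¹' Uo)))
    (C : Set A) (hC : IsCofinalSub C) :
    ∀ a ∈ C, o ≤ a → ∃ b ∈ C, a ≤ b ∧
      ∀ V : Set (T.X a), IsOpen V → V.Nonempty →
        ∃ W : Set (T.X b), IsOpen W ∧ W.Nonempty ∧
          T.proj b ⁻¹' W ⊆ T.proj a ⁻¹' V \ F.limMap '' (S.proj o ⁻¹' Uo) := by
  have : IsDirectedOrder A := hTτ.2.1.isDirectedOrder (Cardinal.ofNat_le_aleph0.trans hτ)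
  exact fun a _ _ =>
    exists_avoiding_index_general T a (hTτ.2.1.mono (hTτ.1 a)) (hT a).denseRange hnd hC
end
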